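/- Let φ and ψ be automorphisms of the unit ball B_N of C^N. If the commutator [C_ψ*, C_φ] = C_ψ* C_φ − C_φ C_ψ* is compact on H^2(B_N), or on A^2_s(B_N) for some s > −1, then φ∘ψ = ψ∘φ. -/

import Mathlib

open Filter MeasureTheory Metric Set
open scoped ComplexInnerProductSpace Topology

noncomputable section

/-- Borel measurable structure on `ℂ^N`. -/
instance (N : ℕ) : MeasurableSpace (EuclideanSpace ℂ (Fin N)) := borel _

instance (N : ℕ) : BorelSpace (EuclideanSpace ℂ (Fin N)) := ⟨rfl⟩

/-- The open unit ball `B_N` of `ℂ^N`. -/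
abbrev Ball (N : ℕ) : Set (EuclideanSpace ℂ (Fin N)) := Metric.ball 0 1

/-- An abstract presentation of a reproducing-kernel Hilbert space of holomorphic functions on
the unit ball `B_N` with reproducing kernel `K_w(z) = (1 - ⟨z,w⟩)^{-t}`.  For `t = N` this is
the Hardy space `H²(B_N)`; for `t = N + s + 1` (`s > -1`) it is the weighted Bergman space
`A²_s(B_N)`.  Injectivity of evaluation forces the kernels to be total, so such a structure
determines the space uniquely up to canonical unitary equivalence. -/
structure BallKernelSpace (N : ℕ) (t : ℝ) where
  (H : Type)
  [grp : NormedAddCommGroup H]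
  [ips : InnerProductSpace ℂ H]
  [cpl : CompleteSpace H]
  eval : H → EuclideanSpace ℂ (Fin N) → ℂ
  eval_add : ∀ f g : H, ∀ z, eval (f + g) z = eval f z + eval g z
  eval_smul : ∀ (c : ℂ) (f : H) (z : EuclideanSpace ℂ (Fin N)), eval (c • f) z = c * eval f z
  holo : ∀ f : H, DifferentiableOn ℂ (eval f) (Ball N)
  eval_injective : ∀ f g : H, (∀ z ∈ Ball N, eval f z = eval g z) → f = g
  kernel : EuclideanSpace ℂ (Fin N) → H
  eval_kernel : ∀ w ∈ Ball N, ∀ z ∈ Ball N, eval (kernel w) z = (1 - ⟪w, z⟫) ^ (-(t : ℂ))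
  reproducing : ∀ (f : H), ∀ w ∈ Ball N, ⟪kernel w, f⟫ = eval f w

attribute [instance] BallKernelSpace.grp BallKernelSpace.ips BallKernelSpace.cpl

/-- `T` is the composition operator `C_φ : f ↦ f ∘ φ` on `S`. -/
def BallKernelSpace.IsCompositionOperator {N : ℕ} {t : ℝ} (S : BallKernelSpace N t)
    (φ : EuclideanSpace ℂ (Fin N) → EuclideanSpace ℂ (Fin N)) (T : S.H →L[ℂ] S.H) : Prop :=
  ∀ f : S.H, ∀ z ∈ Ball N, S.eval (T f) z = S.eval f (φ z)

/-- `φ` is an automorphism (biholomorphic self-map) of the unit ball `B_N`. -/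
def IsBallAutomorphism (N : ℕ) (φ : EuclideanSpace ℂ (Fin N) → EuclideanSpace ℂ (Fin N)) : Prop :=
  DifferentiableOn ℂ φ (Ball N) ∧ Set.MapsTo φ (Ball N) (Ball N) ∧
    ∃ ψ : EuclideanSpace ℂ (Fin N) → EuclideanSpace ℂ (Fin N),
      DifferentiableOn ℂ ψ (Ball N) ∧ Set.MapsTo ψ (Ball N) (Ball N) ∧
      (∀ z ∈ Ball N, ψ (φ z) = z) ∧ (∀ z ∈ Ball N, φ (ψ z) = z)

/-!
Automorphisms of the ball are Möbius maps, so they are defined up to the sphere. As `w` tends to a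
boundary point `ζ`, the normalized kernels `k_w` are weakly null and concentrate at `ζ`: they are
asymptotic eigenvectors, with eigenvalue `1`, of the multiplication by `⟪ζ, ·⟫`, which is a
contraction because `(‖η‖² - ⟨z,η⟩⟨η,w⟩) (1 - ⟨z,w⟩)^{-t}` is a positive kernel for `1 ≤ t`. The
transformation law of `1 - ⟨z,w⟩` under Möbius maps shows that `C_φ` carries families
concentrating at `φ(η)` to families concentrating at `η`, and that `C_ψ*` carries families
concentrating at `η` to families concentrating at `ψ(η)`. For `w → φ(η)`, therefore, `C_ψ* C_φ k_w`
concentrates at `ψ(η)` and `C_φ C_ψ* k_w` at `φ⁻¹(ψ(φ(η)))`, while their difference tends to `0` by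
compactness of the commutator. Were the two points distinct, both families would tend to `0`,
whereas `‖C_φ C_ψ* k_w‖` is bounded below. Hence `φ ∘ ψ = ψ ∘ φ` on the sphere, and in the ball by
the maximum principle.
-/

section Moebius

variable {E : Type*} [NormedAddCommGroup E] [InnerProductSpace ℂ E]

lemma one_sub_norm_le_norm_one_sub_inner {w z : E} (hz : ‖z‖ ≤ 1) : 1 - ‖w‖ ≤ ‖1 - ⟪w, z⟫‖ := by
  have hinner : ‖⟪w, z⟫‖ ≤ ‖w‖ :=
    (norm_inner_le_norm w z).trans (mul_le_of_le_one_right (norm_nonneg w) hz)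
  have htri := norm_sub_norm_le (1 : ℂ) ⟪w, z⟫
  rw [norm_one] at htri
  linarith

lemma one_sub_inner_ne_zero {w z : E} (hw : ‖w‖ < 1) (hz : ‖z‖ ≤ 1) : 1 - ⟪w, z⟫ ≠ 0 :=
  norm_pos_iff.mp ((sub_pos.mpr hw).trans_le (one_sub_norm_le_norm_one_sub_inner hz))

lemma one_sub_inner_ne_zero' {w z : E} (hw : ‖w‖ ≤ 1) (hz : ‖z‖ < 1) : 1 - ⟪w, z⟫ ≠ 0 := by
  simpa [inner_conj_symm] using
    (map_ne_zero (starRingEnd ℂ)).mpr (one_sub_inner_ne_zero hz hw)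

/-- The Möbius involution `φ_a` of the unit ball that exchanges `0` and `a`. The usual formula
`(a - P z - s Q z) / (1 - ⟨z, a⟩)`, with `P` the projection onto `ℂ a`, `Q = 1 - P` and
`s = √(1 - ‖a‖²)`, is rewritten by `(1 - s) / ‖a‖² = 1 / (1 + s)` so as to cover `a = 0`. -/
def moebiusInvolution (a z : E) : E :=
  (1 - ⟪a, z⟫)⁻¹ • (a - (√(1 - ‖a‖ ^ 2) : ℂ) • z - (⟪a, z⟫ / (1 + (√(1 - ‖a‖ ^ 2) : ℂ))) • a)

@[simp]
lemma moebiusInvolution_zero (a : E) : moebiusInvolution a 0 = a := by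
  simp [moebiusInvolution]

lemma moebiusInvolution_map (U : E ≃ₗᵢ[ℂ] E) (a z : E) :
    moebiusInvolution (U a) (U z) = U (moebiusInvolution a z) := by
  simp only [moebiusInvolution, LinearIsometryEquiv.inner_map_map,
    LinearIsometryEquiv.norm_map, map_smul, map_sub]

lemma inner_self_eq_one_sub_sqrt_sq {a : E} (ha : ‖a‖ < 1) :
    ⟪a, a⟫ = 1 - (√(1 - ‖a‖ ^ 2) : ℂ) ^ 2 := by
  have hsq : √(1 - ‖a‖ ^ 2) ^ 2 = 1 - ‖a‖ ^ 2 := Real.sq_sqrt (by nlinarith [norm_nonneg a])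
  rw [inner_self_eq_norm_sq_to_K, ← Complex.ofReal_pow (√_), hsq]
  simp

lemma one_add_ofReal_sqrt_ne_zero (r : ℝ) : 1 + (√r : ℂ) ≠ 0 := by
  exact_mod_cast (by positivity : 1 + √r ≠ 0)

lemma one_sub_inner_moebiusInvolution {a w z : E} (ha : ‖a‖ < 1) (hw : ‖w‖ ≤ 1) (hz : ‖z‖ ≤ 1) :
    (1 - ⟪moebiusInvolution a w, moebiusInvolution a z⟫) * ((1 - ⟪a, z⟫) * (1 - ⟪w, a⟫)) =
      (1 - ⟪a, a⟫) * (1 - ⟪w, z⟫) := by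
  have hz' := one_sub_inner_ne_zero ha hz
  have hw' := one_sub_inner_ne_zero' hw ha
  have hs := one_add_ofReal_sqrt_ne_zero (1 - ‖a‖ ^ 2)
  simp only [moebiusInvolution, inner_smul_left, inner_smul_right, inner_sub_left,
    inner_sub_right, map_inv₀, map_sub, map_one, inner_conj_symm, map_div₀, map_add,
    Complex.conj_ofReal, inner_self_eq_one_sub_sqrt_sq ha]
  field_simp
  ring

lemma moebiusInvolution_moebiusInvolution {a z : E} (ha : ‖a‖ < 1) (hz : ‖z‖ ≤ 1) :
    moebiusInvolution a (moebiusInvolution a z) = z := by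
  have hz' := one_sub_inner_ne_zero ha hz
  have hs := one_add_ofReal_sqrt_ne_zero (1 - ‖a‖ ^ 2)
  have hs' : (√(1 - ‖a‖ ^ 2) : ℂ) ≠ 0 := by
    exact_mod_cast (Real.sqrt_pos.mpr (by nlinarith [norm_nonneg a])).ne'
  have hinner : ⟪a, moebiusInvolution a z⟫ = 1 - (√(1 - ‖a‖ ^ 2) : ℂ) ^ 2 / (1 - ⟪a, z⟫) := by
    simp only [moebiusInvolution, inner_smul_right, inner_sub_right,
      inner_self_eq_one_sub_sqrt_sq ha]
    field_simp
    ring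
  rw [moebiusInvolution, hinner, moebiusInvolution]
  match_scalars <;> field_simp <;> ring

end Moebius

/-- An automorphism of the unit ball in normal form: a Möbius involution followed by a unitary.
Being given by a formula, it is defined up to the boundary of the ball. -/
structure BallMoebius (E : Type*) [NormedAddCommGroup E] [InnerProductSpace ℂ E] where
  center : E
  norm_center_lt : ‖center‖ < 1
  unitary : E ≃ₗᵢ[ℂ] E

namespace BallMoebius

variable {E : Type*} [NormedAddCommGroup E] [InnerProductSpace ℂ E]

/-- The automorphism as a function; it is meaningful on the closed unit ball only. -/
def toFun (f : BallMoebius E) (z : E) : E := f.unitary (moebiusInvolution f.center z)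

instance : CoeFun (BallMoebius E) fun _ ↦ E → E := ⟨toFun⟩

/-- The inverse automorphism: `z ↦ φ_a (U⁻¹ z)` is `z ↦ U⁻¹ (φ_{U a} z)` in normal form. -/
def symm (f : BallMoebius E) : BallMoebius E where
  center := f.unitary f.center
  norm_center_lt := by rw [f.unitary.norm_map]; exact f.norm_center_lt
  unitary := f.unitary.symm

variable (f : BallMoebius E) {w z : E}

lemma symm_apply_apply (hz : ‖z‖ ≤ 1) : f.symm (f z) = z := by
  change f.unitary.symm (moebiusInvolution (f.unitary f.center)
    (f.unitary (moebiusInvolution f.center z))) = z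
  rw [moebiusInvolution_map, f.unitary.symm_apply_apply,
    moebiusInvolution_moebiusInvolution f.norm_center_lt hz]

lemma apply_symm_apply (hz : ‖z‖ ≤ 1) : f (f.symm z) = z := by
  have hsymm : f.symm.symm = f := by simp [symm]
  simpa only [hsymm] using f.symm.symm_apply_apply hz

lemma one_sub_inner_apply_apply (hw : ‖w‖ ≤ 1) (hz : ‖z‖ ≤ 1) :
    (1 - ⟪f w, f z⟫) * ((1 - ⟪f.center, z⟫) * (1 - ⟪w, f.center⟫)) =
      (1 - ⟪f.center, f.center⟫) * (1 - ⟪w, z⟫) := by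
  rw [toFun, toFun, f.unitary.inner_map_map]
  exact one_sub_inner_moebiusInvolution f.norm_center_lt hw hz

lemma one_sub_norm_apply_sq (hz : ‖z‖ ≤ 1) :
    (1 - ‖f z‖ ^ 2) * ‖1 - ⟪f.center, z⟫‖ ^ 2 = (1 - ‖f.center‖ ^ 2) * (1 - ‖z‖ ^ 2) := by
  have hconj : 1 - ⟪z, f.center⟫ = starRingEnd ℂ (1 - ⟪f.center, z⟫) := by simp
  have key := f.one_sub_inner_apply_apply hz hz
  rw [hconj, Complex.mul_conj'] at key
  simp only [inner_self_eq_norm_sq_to_K, Complex.coe_algebraMap] at key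
  exact_mod_cast key

lemma norm_apply_lt_one (hz : ‖z‖ < 1) : ‖f z‖ < 1 := by
  have key := f.one_sub_norm_apply_sq hz.le
  have hc := f.norm_center_lt
  have hpos : 0 < (1 - ‖f.center‖ ^ 2) * (1 - ‖z‖ ^ 2) :=
    mul_pos (by nlinarith [norm_nonneg f.center]) (by nlinarith [norm_nonneg z])
  nlinarith [pos_of_mul_pos_left (key ▸ hpos) (by positivity), norm_nonneg (f z)]

lemma mapsTo_ball : MapsTo f (ball 0 1) (ball 0 1) := fun _ hz ↦
  mem_ball_zero_iff.mpr (f.norm_apply_lt_one (mem_ball_zero_iff.mp hz))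

lemma norm_apply_eq_one (hz : ‖z‖ = 1) : ‖f z‖ = 1 := by
  have key := f.one_sub_norm_apply_sq hz.le
  have hne := norm_ne_zero_iff.mpr (one_sub_inner_ne_zero f.norm_center_lt hz.le)
  rw [hz, one_pow, sub_self, mul_zero, mul_eq_zero_iff_right (pow_ne_zero 2 hne)] at key
  exact (pow_eq_one_iff_of_nonneg (norm_nonneg _) two_ne_zero).mp (sub_eq_zero.mp key).symm

lemma norm_apply_le_one (hz : ‖z‖ ≤ 1) : ‖f z‖ ≤ 1 :=
  hz.lt_or_eq.elim (fun h ↦ (f.norm_apply_lt_one h).le) fun h ↦ (f.norm_apply_eq_one h).le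

lemma differentiableOn : DifferentiableOn ℂ f (closedBall 0 1) := fun z hz ↦ by
  have hden := one_sub_inner_ne_zero f.norm_center_lt (mem_closedBall_zero_iff.mp hz)
  have hinner : DifferentiableAt ℂ (fun z ↦ ⟪f.center, z⟫) z :=
    (innerSL ℂ f.center).differentiableAt
  refine (f.unitary.differentiableAt.comp z ?_).differentiableWithinAt
  have hquot : DifferentiableAt ℂ
      (fun z ↦ ⟪f.center, z⟫ / (1 + (√(1 - ‖f.center‖ ^ 2) : ℂ))) z := by
    simpa only [div_eq_mul_inv] using hinner.mul_const _
  exact ((hinner.const_sub 1).inv hden).smul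
    (((differentiableAt_id.const_smul _).const_sub _).sub (hquot.smul_const _))

lemma exists_one_sub_inner_mul_eq (hw : ‖w‖ ≤ 1) :
    ∃ κ : ℂ, κ ≠ 0 ∧ ∀ z : E, ‖z‖ ≤ 1 →
      (1 - ⟪f.center, z⟫) * (1 - ⟪f w, f z⟫) = κ * (1 - ⟪w, z⟫) := by
  have hc := f.norm_center_lt
  have hden := one_sub_inner_ne_zero' hw hc
  refine ⟨(1 - ⟪f.center, f.center⟫) / (1 - ⟪w, f.center⟫),
    div_ne_zero (one_sub_inner_ne_zero hc hc.le) hden, fun z hz ↦ ?_⟩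
  have key := f.one_sub_inner_apply_apply hw hz
  field_simp
  linear_combination key

lemma exists_one_sub_inner_eq_mul (hw : ‖w‖ ≤ 1) :
    ∃ κ : ℂ, ∀ z : E, ‖z‖ ≤ 1 →
      1 - ⟪f w, f z⟫ = κ * ((1 - ⟪w, z⟫) * (1 - ⟪f 0, f z⟫)) := by
  have hden := one_sub_inner_ne_zero' hw f.norm_center_lt
  refine ⟨(1 - ⟪w, f.center⟫)⁻¹, fun z hz ↦ ?_⟩
  have hz' := one_sub_inner_ne_zero f.norm_center_lt hz
  have key := f.one_sub_inner_apply_apply hw hz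
  have key₀ := f.one_sub_inner_apply_apply (w := 0) (by simp) hz
  simp only [inner_zero_left, sub_zero, mul_one] at key₀
  rw [← key₀] at key
  field_simp
  refine mul_right_cancel₀ hz' ?_
  linear_combination key

lemma exists_one_sub_norm_apply_sq_le :
    ∃ D : ℝ, 0 ≤ D ∧ ∀ z : E, ‖z‖ ≤ 1 → 1 - ‖f z‖ ^ 2 ≤ D * (1 - ‖z‖ ^ 2) := by
  have hc := sub_pos.mpr f.norm_center_lt
  have hc2 : 0 ≤ 1 - ‖f.center‖ ^ 2 := by nlinarith [norm_nonneg f.center]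
  refine ⟨(1 - ‖f.center‖ ^ 2) / (1 - ‖f.center‖) ^ 2, by positivity, fun z hz ↦ ?_⟩
  rw [div_mul_eq_mul_div, le_div_iff₀ (by positivity), ← f.one_sub_norm_apply_sq hz]
  have hfz : 0 ≤ 1 - ‖f z‖ ^ 2 := by nlinarith [f.norm_apply_le_one hz, norm_nonneg (f z)]
  gcongr
  exact one_sub_norm_le_norm_one_sub_inner hz

end BallMoebius

section Cartan

variable {E F : Type*} [NormedAddCommGroup E] [NormedSpace ℂ E]
  [NormedAddCommGroup F] [NormedSpace ℂ F]

-- The equality case of the Schwarz lemma on the slice `l ↦ f (l • z)`, at `l = 1`.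
lemma eqOn_fderiv_of_norm_eq [StrictConvexSpace ℝ F] {f : E → F}
    (hf : DifferentiableOn ℂ f (ball 0 1)) (hnorm : ∀ z, ‖z‖ < 1 → ‖f z‖ = ‖z‖) :
    EqOn f (fderiv ℂ f 0) (ball 0 1) := by
  intro z hz
  have hf0 : f 0 = 0 := norm_eq_zero.mp ((hnorm 0 (by simp)).trans norm_zero)
  rcases eq_or_ne z 0 with rfl | hz0
  · rw [hf0, map_zero]
  have hz_pos : 0 < ‖z‖ := norm_pos_iff.mpr hz0
  have hslice : MapsTo (fun l : ℂ ↦ l • z) (ball 0 (1 / ‖z‖)) (ball 0 1) := fun l hl ↦ by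
    rw [mem_ball_zero_iff] at hl ⊢
    rwa [norm_smul, ← lt_div_iff₀ hz_pos]
  have hdiff : DifferentiableOn ℂ (fun l : ℂ ↦ f (l • z)) (ball 0 (1 / ‖z‖)) :=
    hf.comp (by fun_prop) hslice
  have hmaps : MapsTo (fun l : ℂ ↦ f (l • z)) (ball 0 (1 / ‖z‖))
      (closedBall (f ((0 : ℂ) • z)) 1) := fun l hl ↦ by
    have hlz := mem_ball_zero_iff.mp (hslice hl)
    rw [zero_smul, hf0, mem_closedBall_zero_iff, hnorm _ hlz]
    exact hlz.le
  have hone : (1 : ℂ) ∈ ball (0 : ℂ) (1 / ‖z‖) := by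
    simpa using (one_lt_inv₀ hz_pos).mpr (mem_ball_zero_iff.mp hz)
  have hslope : dslope (fun l : ℂ ↦ f (l • z)) 0 1 = f z := by
    simp [dslope_of_ne _ (one_ne_zero (α := ℂ)), slope_def_module, hf0]
  have haffine := Complex.affine_of_mapsTo_ball_of_norm_dslope_eq_div hdiff hmaps hone
    (by rw [hslope, hnorm z (mem_ball_zero_iff.mp hz), one_div_one_div])
  have hderiv : HasDerivAt (fun l : ℂ ↦ f (l • z)) (f z) 0 := by
    have hlin : HasDerivAt (fun l : ℂ ↦ l • f z) (f z) 0 := by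
      simpa using (hasDerivAt_id (0 : ℂ)).smul_const (f z)
    refine hlin.congr_of_eventuallyEq ?_
    filter_upwards [ball_mem_nhds (0 : ℂ) (one_div_pos.mpr hz_pos)] with l hl
    simpa [hf0, hslope] using haffine hl
  have hchain : HasDerivAt (fun l : ℂ ↦ f (l • z)) (fderiv ℂ f 0 z) 0 := by
    simpa only [HasLineDerivAt, zero_add] using
      (hf.differentiableAt (ball_mem_nhds 0 one_pos)).hasFDerivAt.hasLineDerivAt z
  exact hderiv.unique hchain

lemma exists_smul_mem_ball (z : E) : ∃ c : ℂ, c ≠ 0 ∧ ‖c • z‖ < 1 := by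
  have hpos : 0 < 1 + ‖z‖ := by positivity
  have hnorm : ‖(((1 + ‖z‖)⁻¹ : ℝ) : ℂ)‖ = (1 + ‖z‖)⁻¹ := by
    rw [Complex.norm_real, Real.norm_of_nonneg (by positivity)]
  refine ⟨((1 + ‖z‖)⁻¹ : ℝ), by exact_mod_cast (inv_pos.mpr hpos).ne', ?_⟩
  rw [norm_smul, hnorm, inv_mul_lt_iff₀ hpos]
  linarith

lemma norm_eq_of_inverse_of_map_zero {f : E → F} {g : F → E}
    (hf : DifferentiableOn ℂ f (ball 0 1)) (hf_maps : MapsTo f (ball 0 1) (ball 0 1))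
    (hg : DifferentiableOn ℂ g (ball 0 1)) (hg_maps : MapsTo g (ball 0 1) (ball 0 1))
    (hgf : LeftInvOn g f (ball 0 1)) (hf0 : f 0 = 0) {z : E} (hz : ‖z‖ < 1) :
    ‖f z‖ = ‖z‖ := by
  have hg0 : g 0 = 0 := by simpa only [hf0] using hgf (mem_ball_self one_pos)
  have hz' : z ∈ ball (0 : E) 1 := mem_ball_zero_iff.mpr hz
  refine (Complex.norm_le_norm_of_mapsTo_ball hf (hf_maps.mono_right ball_subset_closedBall)
    hf0 hz).antisymm ?_
  simpa only [hgf hz'] using Complex.norm_le_norm_of_mapsTo_ball hg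
    (hg_maps.mono_right ball_subset_closedBall) hg0 (mem_ball_zero_iff.mp (hf_maps hz'))

lemma exists_linearIsometryEquiv_eqOn_ball [StrictConvexSpace ℝ F] {f : E → F} {g : F → E}
    (hf : DifferentiableOn ℂ f (ball 0 1)) (hf_maps : MapsTo f (ball 0 1) (ball 0 1))
    (hg : DifferentiableOn ℂ g (ball 0 1)) (hg_maps : MapsTo g (ball 0 1) (ball 0 1))
    (hfg : InvOn g f (ball 0 1) (ball 0 1)) (hf0 : f 0 = 0) :
    ∃ U : E ≃ₗᵢ[ℂ] F, EqOn f U (ball 0 1) := by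
  have hnorm : ∀ z, ‖z‖ < 1 → ‖f z‖ = ‖z‖ := fun z hz ↦
    norm_eq_of_inverse_of_map_zero hf hf_maps hg hg_maps hfg.1 hf0 hz
  have hlinear := eqOn_fderiv_of_norm_eq hf hnorm
  have hisometry : ∀ z, ‖fderiv ℂ f 0 z‖ = ‖z‖ := fun z ↦ by
    obtain ⟨c, hc, hcz⟩ := exists_smul_mem_ball z
    have hscaled := hnorm _ hcz
    rw [hlinear (mem_ball_zero_iff.mpr hcz), map_smul, norm_smul, norm_smul] at hscaled
    exact mul_left_cancel₀ (norm_ne_zero_iff.mpr hc) hscaled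
  have hsurj : Function.Surjective (fderiv ℂ f 0) := fun y ↦ by
    obtain ⟨c, hc, hcy⟩ := exists_smul_mem_ball y
    have hcy' : c • y ∈ ball (0 : F) 1 := mem_ball_zero_iff.mpr hcy
    exact ⟨c⁻¹ • g (c • y), by
      rw [map_smul, ← hlinear (hg_maps hcy'), hfg.2 hcy', inv_smul_smul₀ hc]⟩
  exact ⟨.ofSurjective ⟨(fderiv ℂ f 0).toLinearMap, hisometry⟩ hsurj, hlinear⟩

end Cartan

lemma BallMoebius.exists_eqOn_ball {E : Type*} [NormedAddCommGroup E] [InnerProductSpace ℂ E]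
    {φ ψ : E → E} (hφ : DifferentiableOn ℂ φ (ball 0 1)) (hφ_maps : MapsTo φ (ball 0 1) (ball 0 1))
    (hψ : DifferentiableOn ℂ ψ (ball 0 1)) (hψ_maps : MapsTo ψ (ball 0 1) (ball 0 1))
    (hinv : InvOn ψ φ (ball 0 1) (ball 0 1)) :
    ∃ f : BallMoebius E, EqOn φ f (ball 0 1) := by
  let _ := InnerProductSpace.rclikeToReal ℂ E
  have h0 : (0 : E) ∈ ball (0 : E) 1 := mem_ball_self one_pos
  let μ : BallMoebius E := ⟨ψ 0, mem_ball_zero_iff.mp (hψ_maps h0), .refl ℂ E⟩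
  have hμ : DifferentiableOn ℂ μ (ball 0 1) := μ.differentiableOn.mono ball_subset_closedBall
  have hμμ : ∀ z ∈ ball (0 : E) 1, μ (μ z) = z := fun z hz ↦
    moebiusInvolution_moebiusInvolution μ.norm_center_lt (mem_ball_zero_iff.mp hz).le
  have hμ0 : μ 0 = ψ 0 := moebiusInvolution_zero _
  obtain ⟨U, hU⟩ := exists_linearIsometryEquiv_eqOn_ball (hφ.comp hμ μ.mapsTo_ball)
    (hφ_maps.comp μ.mapsTo_ball) (hμ.comp hψ hψ_maps) (μ.mapsTo_ball.comp hψ_maps)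
    ⟨fun z hz ↦ by simp only [Function.comp_apply, hinv.1 (μ.mapsTo_ball hz), hμμ z hz],
      fun z hz ↦ by simp only [Function.comp_apply, hμμ _ (hψ_maps hz), hinv.2 hz]⟩
    (by rw [Function.comp_apply, hμ0, hinv.2 h0])
  refine ⟨⟨μ.center, μ.norm_center_lt, U⟩, fun z hz ↦ ?_⟩
  have hUz := hU (μ.mapsTo_ball hz)
  rwa [Function.comp_apply, hμμ z hz] at hUz

lemma IsBallAutomorphism.exists_ballMoebius {N : ℕ}
    {φ : EuclideanSpace ℂ (Fin N) → EuclideanSpace ℂ (Fin N)} (hφ : IsBallAutomorphism N φ) :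
    ∃ f : BallMoebius (EuclideanSpace ℂ (Fin N)), EqOn φ f (Ball N) := by
  obtain ⟨hdiff, hmaps, ψ, hψ, hψ_maps, hleft, hright⟩ := hφ
  exact BallMoebius.exists_eqOn_ball hdiff hmaps hψ hψ_maps ⟨hleft, hright⟩

lemma BallMoebius.commute_of_commute_on_sphere {E : Type*} [NormedAddCommGroup E]
    [InnerProductSpace ℂ E] {f g : BallMoebius E}
    (hfg : ∀ η : E, ‖η‖ = 1 → f (g η) = g (f η)) {z : E} (hz : ‖z‖ < 1) : f (g z) = g (f z) := by
  rcases subsingleton_or_nontrivial E with _ | _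
  · exact Subsingleton.elim _ _
  let _ := InnerProductSpace.rclikeToReal ℂ E
  have hmaps : ∀ h : BallMoebius E, MapsTo h (closedBall 0 1) (closedBall 0 1) := fun h w hw ↦
    mem_closedBall_zero_iff.mpr (h.norm_apply_le_one (mem_closedBall_zero_iff.mp hw))
  have hclosed : closure (ball (0 : E) 1) ⊆ closedBall 0 1 := closure_ball_subset_closedBall
  have hfg_diff : DiffContOnCl ℂ (f ∘ g) (ball 0 1) :=
    ((f.differentiableOn.comp g.differentiableOn (hmaps g)).mono hclosed).diffContOnCl
  have hgf_diff : DiffContOnCl ℂ (g ∘ f) (ball 0 1) :=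
    ((g.differentiableOn.comp f.differentiableOn (hmaps f)).mono hclosed).diffContOnCl
  refine Complex.eqOn_of_eqOn_frontier isBounded_ball hfg_diff hgf_diff (fun η hη ↦ ?_)
    (mem_ball_zero_iff.mpr hz)
  rw [frontier_ball (0 : E) one_ne_zero, mem_sphere_zero_iff_norm] at hη
  exact hfg η hη

section PositiveSemidefinite

open scoped ComplexOrder
open Matrix

variable {ι 𝕜 : Type*} [RCLike 𝕜]

variable {H H' : Type*} [SeminormedAddCommGroup H] [InnerProductSpace 𝕜 H]
  [SeminormedAddCommGroup H'] [InnerProductSpace 𝕜 H']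

lemma finsuppSum_gram_eq_norm_linearCombination_sq (v : ι → H) (l : ι →₀ 𝕜) :
    (l.sum fun i a ↦ l.sum fun j b ↦ star a * gram 𝕜 v i j * b) =
      (‖Finsupp.linearCombination 𝕜 v l‖ : 𝕜) ^ 2 := by
  simp only [← inner_self_eq_norm_sq_to_K, Finsupp.linearCombination_apply, Finsupp.sum, sum_inner,
    inner_sum, inner_smul_left, inner_smul_right, gram_apply, RCLike.star_def, Finset.mul_sum]
  rw [Finset.sum_comm]
  exact Finset.sum_congr rfl fun i _ ↦ Finset.sum_congr rfl fun j _ ↦ by ring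

lemma gram_posSemidef (v : ι → H) : (gram 𝕜 v).PosSemidef := by
  refine ⟨isHermitian_gram 𝕜 v, fun l ↦ ?_⟩
  rw [finsuppSum_gram_eq_norm_linearCombination_sq]
  exact_mod_cast sq_nonneg ‖Finsupp.linearCombination 𝕜 v l‖

lemma posSemidef_of_hasSum {κ : Type*} {A : κ → Matrix ι ι 𝕜} {B : Matrix ι ι 𝕜}
    (hA : ∀ k, (A k).PosSemidef) (hAB : HasSum A B) : B.PosSemidef := by
  have hentry : ∀ i j, HasSum (fun k ↦ A k i j) (B i j) := fun i j ↦
    Pi.hasSum.mp (Pi.hasSum.mp hAB i) j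
  constructor
  · refine (hAB.matrix_conjTranspose.congr_fun ?_).unique hAB
    exact fun k ↦ ((hA k).isHermitian).symm
  · intro x
    exact (hasSum_sum fun i _ ↦ hasSum_sum fun j _ ↦
      ((hentry i j).mul_left _).mul_right _).nonneg fun k ↦ (hA k).2 x

lemma posSemidef_map_pow {A : Matrix ι ι 𝕜} (hA : A.PosSemidef) (n : ℕ) :
    (A.map (· ^ n)).PosSemidef := by
  induction n with
  | zero =>
    convert gram_posSemidef (𝕜 := 𝕜) fun _ : ι ↦ (1 : 𝕜) using 1
    ext i j
    simp
  | succ n ih =>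
    convert ih.hadamard hA using 1
    ext i j
    simp [pow_succ]

lemma ringChoose_add_sub_one_nonneg {τ : ℝ} (hτ : 0 ≤ τ) (n : ℕ) :
    0 ≤ Ring.choose (τ + n - 1) n := by
  have hpochhammer : 0 ≤ (ascPochhammer ℝ n).eval τ := by
    induction n with
    | zero => simp
    | succ n ih => rw [ascPochhammer_succ_eval]; positivity
  have hchoose : Ring.choose (τ + n - 1) n = Ring.multichoose τ n := by
    rw [Ring.choose]; congr 1; ring
  rw [← Polynomial.ascPochhammer_smeval_eq_eval,
    ← Ring.factorial_nsmul_multichoose_eq_ascPochhammer, ← hchoose, nsmul_eq_mul] at hpochhammer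
  exact nonneg_of_mul_nonneg_right hpochhammer (by positivity)

lemma hasSum_one_sub_cpow_neg (τ : ℝ) {x : ℂ} (hx : ‖x‖ < 1) :
    HasSum (fun n : ℕ ↦ Ring.choose (τ + n - 1) n • x ^ n) ((1 - x) ^ (-(τ : ℂ))) := by
  have hball : x ∈ Metric.eball (0 : ℂ) 1 := by
    rwa [Metric.mem_eball, edist_zero_right, ← ofReal_norm, ENNReal.ofReal_lt_one]
  have hsum := (Complex.one_div_one_sub_cpow_hasFPowerSeriesOnBall_zero (τ : ℂ)).hasSum hball
  simp only [zero_add, one_div, ← Complex.cpow_neg] at hsum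
  refine hsum.congr_fun fun n ↦ ?_
  rw [Complex.real_smul, Complex.ofReal_choose]
  simp [FormalMultilinearSeries.ofScalars]

lemma posSemidef_map_one_sub_cpow_neg {A : Matrix ι ι ℂ} (hA : A.PosSemidef)
    (hlt : ∀ i j, ‖A i j‖ < 1) {τ : ℝ} (hτ : 0 ≤ τ) :
    (A.map fun x ↦ (1 - x) ^ (-(τ : ℂ))).PosSemidef :=
  posSemidef_of_hasSum
    (fun n ↦ (posSemidef_map_pow hA n).smul (ringChoose_add_sub_one_nonneg hτ n))
    (Pi.hasSum.mpr fun i ↦ Pi.hasSum.mpr fun j ↦ hasSum_one_sub_cpow_neg τ (hlt i j))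

lemma norm_linearCombination_le_of_posSemidef {v : ι → H} {u : ι → H'} {C : ℝ} (hC : 0 ≤ C)
    (huv : (C ^ 2 • gram 𝕜 v - gram 𝕜 u).PosSemidef) (l : ι →₀ 𝕜) :
    ‖Finsupp.linearCombination 𝕜 u l‖ ≤ C * ‖Finsupp.linearCombination 𝕜 v l‖ := by
  have hquad : (0 : 𝕜) ≤ C ^ 2 * (‖Finsupp.linearCombination 𝕜 v l‖ : 𝕜) ^ 2 -
      (‖Finsupp.linearCombination 𝕜 u l‖ : 𝕜) ^ 2 := by
    convert huv.2 l using 1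
    simp only [← finsuppSum_gram_eq_norm_linearCombination_sq, Finsupp.sum, Matrix.sub_apply,
      Matrix.smul_apply, Finset.mul_sum, ← Finset.sum_sub_distrib, RCLike.real_smul_eq_coe_mul,
      RCLike.ofReal_pow]
    exact Finset.sum_congr rfl fun i _ ↦ Finset.sum_congr rfl fun j _ ↦ by ring
  rw [← mul_pow, sub_nonneg] at hquad
  exact (sq_le_sq₀ (norm_nonneg _) (by positivity)).mp (by exact_mod_cast hquad)

end PositiveSemidefinite

section HilbertSpace

variable {α H : Type*} [NormedAddCommGroup H] [InnerProductSpace ℂ H] {l : Filter α}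
  {x : α → H} {C : ℝ}

lemma exists_norm_apply_le (T : H →L[ℂ] H) (hx : ∃ C, ∀ a, ‖x a‖ ≤ C) :
    ∃ C, ∀ a, ‖T (x a)‖ ≤ C :=
  hx.imp' (‖T‖ * ·) fun _ hC a ↦ T.le_opNorm_of_le (hC a)

-- Expand `‖x - L† x‖²` and bound `‖L† x‖` by `‖x‖`.
lemma norm_sub_adjoint_sq_le [CompleteSpace H] {L : H →L[ℂ] H} (hL : ‖L‖ ≤ 1) (x : H) :
    ‖x - L.adjoint x‖ ^ 2 ≤ 2 * (‖x - L x‖ * ‖x‖) := by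
  have hadj : ‖L.adjoint x‖ ≤ ‖x‖ :=
    (L.adjoint.le_of_opNorm_le ((LinearIsometryEquiv.norm_map _ L).trans_le hL) x).trans_eq
      (one_mul _)
  have hcs : RCLike.re ⟪x - L x, x⟫ ≤ ‖x - L x‖ * ‖x‖ := re_inner_le_norm _ _
  rw [inner_sub_left, map_sub, ← ContinuousLinearMap.adjoint_inner_right L,
    inner_self_eq_norm_sq] at hcs
  rw [norm_sub_sq (𝕜 := ℂ)]
  nlinarith [norm_nonneg (L.adjoint x)]

lemma tendsto_sub_adjoint_apply [CompleteSpace H] {L : H →L[ℂ] H} (hL : ‖L‖ ≤ 1)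
    (hx : ∀ a, ‖x a‖ ≤ C) (hxL : Tendsto (fun a ↦ x a - L (x a)) l (𝓝 0)) :
    Tendsto (fun a ↦ x a - L.adjoint (x a)) l (𝓝 0) := by
  have hlim : Tendsto (fun a ↦ 2 * (‖x a - L (x a)‖ * C)) l (𝓝 0) := by
    simpa using (hxL.norm.mul_const C).const_mul 2
  have hsq : Tendsto (fun a ↦ ‖x a - L.adjoint (x a)‖ ^ 2) l (𝓝 0) :=
    squeeze_zero (fun _ ↦ by positivity) (fun a ↦ (norm_sub_adjoint_sq_le hL (x a)).trans
      (by gcongr; exact hx a)) hlim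
  rw [tendsto_zero_iff_norm_tendsto_zero]
  simpa using hsq.sqrt

lemma tendsto_zero_of_sub_apply_tendsto_zero {L : H →L[ℂ] H} (hL : ‖L‖ < 1)
    (hxL : Tendsto (fun a ↦ x a - L (x a)) l (𝓝 0)) : Tendsto x l (𝓝 0) := by
  have hgap : 0 < 1 - ‖L‖ := sub_pos.mpr hL
  have hlim : Tendsto (fun a ↦ ‖x a - L (x a)‖ / (1 - ‖L‖)) l (𝓝 0) := by
    simpa using hxL.norm.div_const (1 - ‖L‖)
  refine squeeze_zero_norm (fun a ↦ (le_div_iff₀ hgap).mpr ?_) hlim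
  linarith [L.le_opNorm (x a), norm_sub_norm_le (x a) (L (x a))]

lemma tendsto_inner_zero_of_dense_span {D : Set H} (hD : Dense (Submodule.span ℂ D : Set H))
    (hx : ∀ a, ‖x a‖ ≤ C) (hxD : ∀ d ∈ D, Tendsto (fun a ↦ ⟪d, x a⟫) l (𝓝 0)) (y : H) :
    Tendsto (fun a ↦ ⟪y, x a⟫) l (𝓝 0) := by
  have hspan : ∀ u ∈ Submodule.span ℂ D, Tendsto (fun a ↦ ⟪u, x a⟫) l (𝓝 0) := fun u hu ↦ by
    induction hu using Submodule.span_induction with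
    | mem d hd => exact hxD d hd
    | zero => simpa using tendsto_const_nhds
    | add u v _ _ hu hv => simpa [inner_add_left] using hu.add hv
    | smul c u _ hu => simpa [inner_smul_left] using hu.mul_const (starRingEnd ℂ c)
  rw [Metric.tendsto_nhds]
  intro ε hε
  have hC : 0 < |C| + 1 := by positivity
  obtain ⟨u, hu, hyu⟩ := Metric.mem_closure_iff.mp (hD y) (ε / 2 / (|C| + 1)) (by positivity)
  filter_upwards [Metric.tendsto_nhds.mp (hspan u hu) (ε / 2) (half_pos hε)] with a ha
  rw [dist_zero_right] at ha ⊢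
  have hsplit : ⟪y, x a⟫ = ⟪y - u, x a⟫ + ⟪u, x a⟫ := by rw [inner_sub_left]; ring
  have hclose : ‖⟪y - u, x a⟫‖ ≤ ε / 2 := calc
    ‖⟪y - u, x a⟫‖ ≤ ‖y - u‖ * ‖x a‖ := norm_inner_le_norm _ _
    _ ≤ ε / 2 / (|C| + 1) * (|C| + 1) := by
      gcongr
      · rw [← dist_eq_norm]; exact hyu.le
      · linarith [hx a, le_abs_self C]
    _ = ε / 2 := div_mul_cancel₀ _ hC.ne'
  rw [hsplit]
  linarith [norm_add_le ⟪y - u, x a⟫ ⟪u, x a⟫]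

lemma tendsto_apply_zero_of_isCompactOperator [CompleteSpace H] {T : H →L[ℂ] H}
    (hT : IsCompactOperator T) (hx : ∀ a, ‖x a‖ ≤ C)
    (hweak : ∀ y, Tendsto (fun a ↦ ⟪y, x a⟫) l (𝓝 0)) :
    Tendsto (fun a ↦ T (x a)) l (𝓝 0) := by
  obtain ⟨K, hK, hTK⟩ := hT.image_closedBall_subset_compact C
  refine hK.tendsto_nhds_of_unique_mapClusterPt (.of_forall fun a ↦
    hTK ⟨x a, mem_closedBall_zero_iff.mpr (hx a), rfl⟩) fun y _ hy ↦ ?_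
  have hcluster : MapClusterPt ⟪y, y⟫ l fun a ↦ ⟪y, T (x a)⟫ :=
    hy.continuousAt_comp (f := fun v ↦ ⟪y, v⟫) (by fun_prop)
  have hlim : Tendsto (fun a ↦ ⟪y, T (x a)⟫) l (𝓝 0) := by
    simpa only [ContinuousLinearMap.adjoint_inner_left] using hweak (T.adjoint y)
  have hnhds : ClusterPt ⟪y, y⟫ (𝓝 0) := ClusterPt.mono hcluster hlim
  exact inner_self_eq_zero.mp (eq_of_nhds_neBot hnhds)

end HilbertSpace

lemma norm_inv_two_smul_add_lt_one {E : Type*} [NormedAddCommGroup E] [InnerProductSpace ℂ E]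
    {η ξ : E} (hη : ‖η‖ = 1) (hξ : ‖ξ‖ = 1) (hne : η ≠ ξ) : ‖(2⁻¹ : ℂ) • (η + ξ)‖ < 1 := by
  have hlaw := parallelogram_law_with_norm ℂ η ξ
  have hpos : 0 < ‖η - ξ‖ := norm_pos_iff.mpr (sub_ne_zero.mpr hne)
  rw [hη, hξ] at hlaw
  rw [norm_smul, norm_inv, RCLike.norm_ofNat]
  nlinarith [norm_nonneg (η + ξ)]

namespace BallKernelSpace

variable {N : ℕ} {t : ℝ} (S : BallKernelSpace N t) {η w z : EuclideanSpace ℂ (Fin N)}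

lemma inner_kernel_kernel (hw : w ∈ Ball N) (hz : z ∈ Ball N) :
    ⟪S.kernel z, S.kernel w⟫ = (1 - ⟪w, z⟫) ^ (-(t : ℂ)) := by
  rw [S.reproducing _ _ hz, S.eval_kernel w hw z hz]

lemma eval_sub (h₁ h₂ : S.H) (z : EuclideanSpace ℂ (Fin N)) :
    S.eval (h₁ - h₂) z = S.eval h₁ z - S.eval h₂ z := by
  rw [sub_eq_add_neg, ← neg_one_smul ℂ h₂, S.eval_add, S.eval_smul]
  ring

lemma norm_kernel_sq (hw : w ∈ Ball N) : ‖S.kernel w‖ ^ 2 = (1 - ‖w‖ ^ 2) ^ (-t) := by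
  have hw1 : ‖w‖ < 1 := mem_ball_zero_iff.mp hw
  have hpos : 0 ≤ 1 - ‖w‖ ^ 2 := by nlinarith [norm_nonneg w]
  have key := S.inner_kernel_kernel hw hw
  simp only [inner_self_eq_norm_sq_to_K, Complex.coe_algebraMap] at key
  rw [← Complex.ofReal_inj, Complex.ofReal_cpow hpos]
  exact_mod_cast key

lemma norm_kernel_pos (hw : w ∈ Ball N) : 0 < ‖S.kernel w‖ := by
  have hw1 : ‖w‖ < 1 := mem_ball_zero_iff.mp hw
  have hpos : 0 < 1 - ‖w‖ ^ 2 := by nlinarith [norm_nonneg w]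
  refine (norm_nonneg _).lt_of_ne' (sq_pos_iff.mp ?_)
  rw [S.norm_kernel_sq hw]
  exact Real.rpow_pos_of_pos hpos _

lemma dense_span_kernel :
    Dense (Submodule.span ℂ (range fun w : Ball N ↦ S.kernel w) : Set S.H) := by
  rw [Submodule.dense_iff_topologicalClosure_eq_top, Submodule.topologicalClosure_eq_top_iff,
    Submodule.eq_bot_iff]
  refine fun h hh ↦ S.eval_injective _ _ fun z hz ↦ ?_
  rw [← S.reproducing h z hz, ← S.reproducing 0 z hz, inner_zero_right]
  exact (Submodule.mem_orthogonal _ _).mp hh _ (Submodule.subset_span ⟨⟨z, hz⟩, rfl⟩)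

lemma denseRange_linearCombination_kernel :
    DenseRange (Finsupp.linearCombination ℂ fun w : Ball N ↦ S.kernel w) := by
  rw [DenseRange, ← LinearMap.coe_range, Finsupp.range_linearCombination]
  exact S.dense_span_kernel

section Multiplication

open Matrix
open scoped ComplexOrder

-- With `G` the transposed Gram matrix of the points, the matrix in question is
-- `‖η‖² (1 - G)^{1-t} + (1 - G)^{-t} ⊙ (‖η‖² G - (⟨z,η⟩⟨η,w⟩))`, all powers being entrywise.
lemma posSemidef_gram_kernel_sub (ht : 1 ≤ t) (η : EuclideanSpace ℂ (Fin N)) :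
    (‖η‖ ^ 2 • gram ℂ (fun w : Ball N ↦ S.kernel w) -
      gram ℂ (fun w : Ball N ↦ ⟪(w : EuclideanSpace ℂ (Fin N)), η⟫ • S.kernel w)).PosSemidef := by
  let points : Ball N → EuclideanSpace ℂ (Fin N) := (↑)
  have hpoints : ∀ z w, ‖(gram ℂ points)ᵀ z w‖ < 1 := fun z w ↦
    (norm_inner_le_norm _ _).trans_lt (mul_lt_one_of_nonneg_of_lt_one_left (norm_nonneg _)
      (mem_ball_zero_iff.mp w.2) (mem_ball_zero_iff.mp z.2).le)
  have hbessel : (‖η‖ ^ 2 • gram ℂ points - gram ℂ fun w ↦ ⟪η, points w⟫).PosSemidef := by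
    simpa [Function.comp_def] using posSemidef_opNorm_smul_gram_sub_gram points (innerSL ℂ η)
  have hpow : ∀ τ : ℝ, 0 ≤ τ →
      ((gram ℂ points)ᵀ.map fun x ↦ (1 - x) ^ (-(τ : ℂ))).PosSemidef := fun τ ↦
    posSemidef_map_one_sub_cpow_neg (gram_posSemidef points).transpose hpoints
  have hsum := ((hpow (t - 1) (by linarith)).smul (sq_nonneg ‖η‖)).add
    ((hpow t (by linarith)).hadamard hbessel.transpose)
  convert hsum using 1
  ext z w
  have hden : 1 - ⟪(w : EuclideanSpace ℂ (Fin N)), (z : EuclideanSpace ℂ (Fin N))⟫ ≠ 0 :=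
    one_sub_inner_ne_zero (mem_ball_zero_iff.mp w.2) (mem_ball_zero_iff.mp z.2).le
  have hshift : -((t - 1 : ℝ) : ℂ) = -(t : ℂ) + 1 := by push_cast; ring
  simp only [Matrix.sub_apply, Matrix.add_apply, Matrix.smul_apply, hadamard_apply, map_apply,
    transpose_apply, gram_apply, points, hshift, Complex.cpow_add _ _ hden, Complex.cpow_one,
    inner_smul_left, inner_smul_right, S.inner_kernel_kernel w.2 z.2, inner_conj_symm,
    Complex.real_smul, RCLike.inner_apply]
  ring

/-- Multiplication by the linear function `⟪η, ·⟫`, constructed as the adjoint of the operator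
`K_w ↦ ⟪w, η⟫ K_w` on kernels, which extends to the whole space for `1 ≤ t`. -/
def mulInner (η : EuclideanSpace ℂ (Fin N)) : S.H →L[ℂ] S.H :=
  ((Finsupp.linearCombination ℂ fun w : Ball N ↦
      ⟪(w : EuclideanSpace ℂ (Fin N)), η⟫ • S.kernel w).extendOfNorm
    (Finsupp.linearCombination ℂ fun w : Ball N ↦ S.kernel w)).adjoint

lemma norm_mulInner_le (ht : 1 ≤ t) (η : EuclideanSpace ℂ (Fin N)) : ‖S.mulInner η‖ ≤ ‖η‖ := by
  rw [mulInner, LinearIsometryEquiv.norm_map]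
  exact LinearMap.opNorm_extendOfNorm_le S.denseRange_linearCombination_kernel (norm_nonneg η)
    (norm_linearCombination_le_of_posSemidef (norm_nonneg η) (S.posSemidef_gram_kernel_sub ht η))

lemma adjoint_mulInner_kernel (ht : 1 ≤ t) (η : EuclideanSpace ℂ (Fin N)) (hw : w ∈ Ball N) :
    (S.mulInner η).adjoint (S.kernel w) = ⟪w, η⟫ • S.kernel w := by
  rw [mulInner, ContinuousLinearMap.adjoint_adjoint]
  simpa using LinearMap.extendOfNorm_eq S.denseRange_linearCombination_kernel
    ⟨_, norm_linearCombination_le_of_posSemidef (norm_nonneg η)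
      (S.posSemidef_gram_kernel_sub ht η)⟩ (Finsupp.single ⟨w, hw⟩ 1)

lemma eval_mulInner (ht : 1 ≤ t) (η : EuclideanSpace ℂ (Fin N)) (h : S.H) (hz : z ∈ Ball N) :
    S.eval (S.mulInner η h) z = ⟪η, z⟫ * S.eval h z := by
  rw [← S.reproducing _ z hz, ← ContinuousLinearMap.adjoint_inner_left,
    S.adjoint_mulInner_kernel ht η hz, inner_smul_left, inner_conj_symm, S.reproducing h z hz]

lemma eval_one_sub_mulInner (ht : 1 ≤ t) (η : EuclideanSpace ℂ (Fin N)) (h : S.H)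
    (hz : z ∈ Ball N) : S.eval ((1 - S.mulInner η) h) z = (1 - ⟪η, z⟫) * S.eval h z := by
  rw [_root_.sub_apply, eval_sub, S.eval_mulInner ht η h hz,
    one_apply_eq_self]
  ring

end Multiplication

section Composition

variable {S} {φ φ' : EuclideanSpace ℂ (Fin N) → EuclideanSpace ℂ (Fin N)}
  {f : BallMoebius (EuclideanSpace ℂ (Fin N))} {T : S.H →L[ℂ] S.H}

lemma IsCompositionOperator.congr (hT : S.IsCompositionOperator φ T)
    (hφ : EqOn φ φ' (Ball N)) : S.IsCompositionOperator φ' T := fun h z hz ↦ by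
  rw [hT h z hz, hφ hz]

lemma IsCompositionOperator.adjoint_kernel (hT : S.IsCompositionOperator φ T)
    (hw : w ∈ Ball N) (hφw : φ w ∈ Ball N) : T.adjoint (S.kernel w) = S.kernel (φ w) :=
  ext_inner_right ℂ fun h ↦ by
    rw [ContinuousLinearMap.adjoint_inner_left, S.reproducing _ w hw, hT h w hw,
      S.reproducing h _ hφw]

lemma IsCompositionOperator.exists_one_sub_mulInner_mul_eq (hT : S.IsCompositionOperator f T)
    (ht : 1 ≤ t) (hη : ‖η‖ ≤ 1) :
    ∃ L : S.H →L[ℂ] S.H, (1 - S.mulInner η) * T = L * (1 - S.mulInner (f η)) := by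
  obtain ⟨κ, hκ, hker⟩ := f.exists_one_sub_inner_mul_eq hη
  refine ⟨κ⁻¹ • ((1 - S.mulInner f.center) * T), ?_⟩
  ext h
  refine S.eval_injective _ _ fun z hz ↦ ?_
  simp only [smul_mul_assoc, smul_apply, mul_apply_eq_comp,
    S.eval_smul, S.eval_one_sub_mulInner ht _ _ hz, hT _ z hz,
    S.eval_one_sub_mulInner ht _ _ (f.mapsTo_ball hz)]
  rw [← mul_assoc (1 - _), hker z (mem_ball_zero_iff.mp hz).le]
  field_simp

lemma IsCompositionOperator.exists_mul_one_sub_mulInner_eq (hT : S.IsCompositionOperator f T)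
    (ht : 1 ≤ t) (hη : ‖η‖ ≤ 1) :
    ∃ L : S.H →L[ℂ] S.H, T * (1 - S.mulInner (f η)) = (1 - S.mulInner η) * L := by
  obtain ⟨κ, hker⟩ := f.exists_one_sub_inner_eq_mul hη
  refine ⟨κ • (T * (1 - S.mulInner (f 0))), ?_⟩
  ext h
  refine S.eval_injective _ _ fun z hz ↦ ?_
  simp only [mul_smul_comm, smul_apply, mul_apply_eq_comp,
    S.eval_smul, S.eval_one_sub_mulInner ht _ _ hz, hT _ z hz,
    S.eval_one_sub_mulInner ht _ _ (f.mapsTo_ball hz)]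
  rw [hker z (mem_ball_zero_iff.mp hz).le]
  ring

end Composition

end BallKernelSpace

namespace BallKernelSpace

variable {N : ℕ} {t : ℝ} {S : BallKernelSpace N t} {η ξ ζ w : EuclideanSpace ℂ (Fin N)}
  {α : Type*} {l : Filter α} {x y : α → S.H}
  {f : BallMoebius (EuclideanSpace ℂ (Fin N))} {T : S.H →L[ℂ] S.H}

section Concentration

/-- A bounded family in `S` whose mass collects at the point `ζ`, in the sense that multiplication
by `⟪ζ, ·⟫` asymptotically acts on it as the identity. -/
structure ConcentratesAt (l : Filter α) (x : α → S.H) (ζ : EuclideanSpace ℂ (Fin N)) : Prop where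
  exists_norm_le : ∃ C, ∀ a, ‖x a‖ ≤ C
  tendsto : Tendsto (fun a ↦ (1 - S.mulInner ζ) (x a)) l (𝓝 0)

lemma ConcentratesAt.tendsto_adjoint (hx : ConcentratesAt l x η) (ht : 1 ≤ t) (hη : ‖η‖ ≤ 1) :
    Tendsto (fun a ↦ (1 - (S.mulInner η).adjoint) (x a)) l (𝓝 0) := by
  obtain ⟨C, hC⟩ := hx.exists_norm_le
  exact tendsto_sub_adjoint_apply ((S.norm_mulInner_le ht η).trans hη) hC hx.tendsto

lemma ConcentratesAt.of_tendsto_adjoint (ht : 1 ≤ t) (hη : ‖η‖ ≤ 1) (hx : ∃ C, ∀ a, ‖x a‖ ≤ C)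
    (hxη : Tendsto (fun a ↦ (1 - (S.mulInner η).adjoint) (x a)) l (𝓝 0)) :
    ConcentratesAt l x η where
  exists_norm_le := hx
  tendsto := by
    obtain ⟨C, hC⟩ := hx
    have hnorm : ‖(S.mulInner η).adjoint‖ ≤ 1 :=
      (LinearIsometryEquiv.norm_map _ _).trans_le ((S.norm_mulInner_le ht η).trans hη)
    rw [← (S.mulInner η).adjoint_adjoint]
    exact tendsto_sub_adjoint_apply hnorm hC hxη

lemma ConcentratesAt.comp (hx : ConcentratesAt l x (f η)) (hT : S.IsCompositionOperator f T)
    (ht : 1 ≤ t) (hη : ‖η‖ ≤ 1) : ConcentratesAt l (fun a ↦ T (x a)) η where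
  exists_norm_le := exists_norm_apply_le T hx.exists_norm_le
  tendsto := by
    obtain ⟨L, hL⟩ := hT.exists_one_sub_mulInner_mul_eq ht hη
    have hlim := (L.continuous.tendsto 0).comp hx.tendsto
    rw [map_zero] at hlim
    exact hlim.congr fun a ↦ (DFunLike.congr_fun hL (x a)).symm

lemma ConcentratesAt.adjoint_comp (hx : ConcentratesAt l x η) (hT : S.IsCompositionOperator f T)
    (ht : 1 ≤ t) (hη : ‖η‖ ≤ 1) : ConcentratesAt l (fun a ↦ T.adjoint (x a)) (f η) := by
  obtain ⟨L, hL⟩ := hT.exists_mul_one_sub_mulInner_eq ht hη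
  have hadj : (1 - (S.mulInner (f η)).adjoint) * T.adjoint =
      L.adjoint * (1 - (S.mulInner η).adjoint) := by
    simpa only [star_mul, star_sub, star_one, ContinuousLinearMap.star_eq_adjoint]
      using congrArg star hL
  have hlim := (L.adjoint.continuous.tendsto 0).comp (hx.tendsto_adjoint ht hη)
  rw [map_zero] at hlim
  exact .of_tendsto_adjoint ht (f.norm_apply_le_one hη)
    (exists_norm_apply_le _ hx.exists_norm_le)
    (hlim.congr fun a ↦ (DFunLike.congr_fun hadj (x a)).symm)

lemma ConcentratesAt.congr (hx : ConcentratesAt l x η) (hy : ∃ C, ∀ a, ‖y a‖ ≤ C)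
    (hyx : Tendsto (fun a ↦ y a - x a) l (𝓝 0)) : ConcentratesAt l y η where
  exists_norm_le := hy
  tendsto := by
    have hdiff := (((1 - S.mulInner η).continuous.tendsto 0).comp hyx).add hx.tendsto
    rw [map_zero, add_zero] at hdiff
    refine hdiff.congr fun a ↦ ?_
    rw [Function.comp_apply, ← map_add, sub_add_cancel]

-- Multiplication by `⟪(η + ξ) / 2, ·⟫` is a strict contraction.
lemma ConcentratesAt.tendsto_zero_of_ne (hxη : ConcentratesAt l x η) (hxξ : ConcentratesAt l x ξ)
    (ht : 1 ≤ t) (hη : ‖η‖ = 1) (hξ : ‖ξ‖ = 1) (hne : η ≠ ξ) : Tendsto x l (𝓝 0) := by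
  have hnorm := (S.norm_mulInner_le ht _).trans_lt (norm_inv_two_smul_add_lt_one hη hξ hne)
  refine tendsto_zero_of_sub_apply_tendsto_zero hnorm ?_
  have hmid : ∀ h : S.H, h - S.mulInner ((2⁻¹ : ℂ) • (η + ξ)) h =
      (2⁻¹ : ℂ) • ((1 - S.mulInner η) h + (1 - S.mulInner ξ) h) := fun h ↦
    S.eval_injective _ _ fun z hz ↦ by
      rw [S.eval_sub, S.eval_mulInner ht _ _ hz, S.eval_smul, S.eval_add,
        S.eval_one_sub_mulInner ht _ _ hz, S.eval_one_sub_mulInner ht _ _ hz, inner_smul_left,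
        inner_add_left, map_inv₀, map_ofNat]
      ring
  simpa only [hmid, add_zero, smul_zero] using
    (hxη.tendsto.add hxξ.tendsto).const_smul (2⁻¹ : ℂ)

end Concentration

section NormalizedKernel

variable (S) in
/-- The normalized reproducing kernel `K_w / ‖K_w‖`. -/
def normalizedKernel (w : EuclideanSpace ℂ (Fin N)) : S.H := (‖S.kernel w‖⁻¹ : ℂ) • S.kernel w

lemma norm_normalizedKernel_le_one (w : EuclideanSpace ℂ (Fin N)) :
    ‖S.normalizedKernel w‖ ≤ 1 := by
  rw [normalizedKernel, norm_smul, norm_inv, Complex.norm_real, norm_norm]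
  exact inv_mul_le_one

lemma tendsto_inv_norm_kernel (ht : 0 < t) (hζ : ‖ζ‖ = 1) :
    Tendsto (fun w ↦ ‖S.kernel w‖⁻¹) (𝓝[Ball N] ζ) (𝓝 0) := by
  have hcont : ContinuousAt (fun w : EuclideanSpace ℂ (Fin N) ↦ (1 - ‖w‖ ^ 2) ^ t) ζ :=
    ContinuousAt.rpow_const (by fun_prop) (.inr ht.le)
  have hlim : Tendsto (fun w ↦ √((1 - ‖w‖ ^ 2) ^ t)) (𝓝[Ball N] ζ) (𝓝 0) := by
    simpa [hζ, ht.ne'] using (hcont.tendsto.mono_left nhdsWithin_le_nhds).sqrt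
  refine hlim.congr' (eventually_mem_nhdsWithin.mono fun w hw ↦ ?_)
  have hpos : 0 ≤ 1 - ‖w‖ ^ 2 := by nlinarith [mem_ball_zero_iff.mp hw, norm_nonneg w]
  rw [Real.sqrt_eq_iff_mul_self_eq (by positivity) (by positivity), ← sq, inv_pow,
    S.norm_kernel_sq hw, Real.rpow_neg hpos, inv_inv]

lemma tendsto_inner_normalizedKernel (ht : 0 < t) (hζ : ‖ζ‖ = 1) (h : S.H) :
    Tendsto (fun w ↦ ⟪h, S.normalizedKernel w⟫) (𝓝[Ball N] ζ) (𝓝 0) := by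
  refine tendsto_inner_zero_of_dense_span S.dense_span_kernel norm_normalizedKernel_le_one
    (forall_mem_range.mpr fun v ↦ ?_) h
  have hslit : 1 - ⟪ζ, (v : EuclideanSpace ℂ (Fin N))⟫ ∈ Complex.slitPlane := by
    refine .inl ?_
    have hlt : ‖⟪ζ, (v : EuclideanSpace ℂ (Fin N))⟫‖ < 1 :=
      (norm_inner_le_norm _ _).trans_lt (by rw [hζ, one_mul]; exact mem_ball_zero_iff.mp v.2)
    simpa using (Complex.re_le_norm _).trans_lt hlt
  have hcont : ContinuousAt
      (fun w ↦ (1 - ⟪w, (v : EuclideanSpace ℂ (Fin N))⟫) ^ (-(t : ℂ))) ζ :=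
    ContinuousAt.cpow (by fun_prop) continuousAt_const hslit
  have hinv := (Complex.continuous_ofReal.tendsto 0).comp (S.tendsto_inv_norm_kernel ht hζ)
  have hlim := hinv.mul (hcont.tendsto.mono_left nhdsWithin_le_nhds)
  rw [Complex.ofReal_zero, zero_mul] at hlim
  refine hlim.congr' (eventually_mem_nhdsWithin.mono fun w hw ↦ ?_)
  dsimp only [normalizedKernel]
  rw [inner_smul_right, S.inner_kernel_kernel hw v.2, Function.comp_apply,
    Complex.ofReal_inv]

lemma concentratesAt_normalizedKernel (ht : 1 ≤ t) (hζ : ‖ζ‖ = 1) :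
    ConcentratesAt (𝓝[Ball N] ζ) S.normalizedKernel ζ := by
  refine .of_tendsto_adjoint ht hζ.le ⟨1, norm_normalizedKernel_le_one⟩ ?_
  have hcont : ContinuousAt (fun w : EuclideanSpace ℂ (Fin N) ↦ ‖1 - ⟪w, ζ⟫‖) ζ := by fun_prop
  have hlim : Tendsto (fun w ↦ ‖1 - ⟪w, ζ⟫‖) (𝓝[Ball N] ζ) (𝓝 0) := by
    simpa [inner_self_eq_norm_sq_to_K, hζ] using hcont.tendsto.mono_left nhdsWithin_le_nhds
  refine squeeze_zero_norm' (eventually_mem_nhdsWithin.mono fun w hw ↦ ?_) hlim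
  have heigen : (1 - (S.mulInner ζ).adjoint) (S.normalizedKernel w) =
      (1 - ⟪w, ζ⟫) • S.normalizedKernel w := by
    rw [_root_.sub_apply, one_apply_eq_self, normalizedKernel, map_smul,
      S.adjoint_mulInner_kernel ht ζ hw, sub_smul, one_smul, smul_comm]
  rw [heigen, norm_smul]
  exact mul_le_of_le_one_right (norm_nonneg _) (norm_normalizedKernel_le_one w)

variable (S) in
lemma exists_norm_kernel_le (ht : 0 ≤ t) (f : BallMoebius (EuclideanSpace ℂ (Fin N))) :
    ∃ C : ℝ, 0 ≤ C ∧ ∀ w ∈ Ball N, ‖S.kernel w‖ ≤ C * ‖S.kernel (f w)‖ := by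
  obtain ⟨D, hD, hf⟩ := f.exists_one_sub_norm_apply_sq_le
  refine ⟨√(D ^ t), by positivity, fun w hw ↦ ?_⟩
  have hfw := f.mapsTo_ball hw
  have hpos : 0 < 1 - ‖w‖ ^ 2 := by nlinarith [mem_ball_zero_iff.mp hw, norm_nonneg w]
  have hfpos : 0 < 1 - ‖f w‖ ^ 2 := by nlinarith [mem_ball_zero_iff.mp hfw, norm_nonneg (f w)]
  have hpow : (1 - ‖f w‖ ^ 2) ^ t ≤ D ^ t * (1 - ‖w‖ ^ 2) ^ t := by
    rw [← Real.mul_rpow hD hpos.le]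
    exact Real.rpow_le_rpow hfpos.le (hf w (mem_ball_zero_iff.mp hw).le) ht
  refine le_of_sq_le_sq ?_ (by positivity)
  rw [mul_pow, Real.sq_sqrt (by positivity), S.norm_kernel_sq hw, S.norm_kernel_sq hfw,
    Real.rpow_neg hpos.le, Real.rpow_neg hfpos.le, ← div_eq_mul_inv, le_div_iff₀ (by positivity),
    inv_mul_le_iff₀ (by positivity), mul_comm]
  exact hpow

lemma IsCompositionOperator.exists_norm_kernel_le_norm_apply (hT : S.IsCompositionOperator f T)
    (ht : 0 ≤ t) : ∃ C : ℝ, ∀ v ∈ Ball N, ‖S.kernel v‖ ≤ C * ‖T (S.kernel v)‖ := by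
  obtain ⟨C, -, hC⟩ := S.exists_norm_kernel_le ht f
  refine ⟨C, fun v hv ↦ ?_⟩
  have hu : f.symm v ∈ Ball N := f.symm.mapsTo_ball hv
  have hfu : f (f.symm v) = v := f.apply_symm_apply (mem_ball_zero_iff.mp hv).le
  have hself : ⟪S.kernel (f.symm v), T (S.kernel v)⟫ = ⟪S.kernel v, S.kernel v⟫ := by
    rw [S.reproducing _ _ hu, hT _ _ hu, hfu, S.reproducing _ v hv]
  have hCv := hC _ hu
  rw [hfu] at hCv
  refine le_of_mul_le_mul_left ?_ (S.norm_kernel_pos hv)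
  calc ‖S.kernel v‖ * ‖S.kernel v‖
      = ‖⟪S.kernel (f.symm v), T (S.kernel v)⟫‖ := by
        rw [hself, ← inner_self_re_eq_norm, inner_self_eq_norm_mul_norm]
    _ ≤ ‖S.kernel (f.symm v)‖ * ‖T (S.kernel v)‖ := norm_inner_le_norm _ _
    _ ≤ C * ‖S.kernel v‖ * ‖T (S.kernel v)‖ := by gcongr
    _ = ‖S.kernel v‖ * (C * ‖T (S.kernel v)‖) := by ring

end NormalizedKernel

end BallKernelSpace

section Commutator

variable {N : ℕ} {t : ℝ} {S : BallKernelSpace N t}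
  {f g : BallMoebius (EuclideanSpace ℂ (Fin N))} {Cf Cg : S.H →L[ℂ] S.H}

lemma BallKernelSpace.IsCompositionOperator.exists_one_le_norm_apply_adjoint
    (hf : S.IsCompositionOperator f Cf) (hg : S.IsCompositionOperator g Cg) (ht : 0 ≤ t) :
    ∃ C : ℝ, ∀ w ∈ Ball N, 1 ≤ C * ‖Cf (Cg.adjoint (S.normalizedKernel w))‖ := by
  obtain ⟨C₁, hC₁, hg_le⟩ := S.exists_norm_kernel_le ht g
  obtain ⟨C₂, hf_le⟩ := hf.exists_norm_kernel_le_norm_apply ht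
  refine ⟨C₁ * C₂, fun w hw ↦ ?_⟩
  have hgw := g.mapsTo_ball hw
  have hpos := S.norm_kernel_pos hw
  have hle : ‖S.kernel w‖ ≤ C₁ * (C₂ * ‖Cf (S.kernel (g w))‖) :=
    (hg_le w hw).trans (mul_le_mul_of_nonneg_left (hf_le _ hgw) hC₁)
  rw [normalizedKernel, map_smul, hg.adjoint_kernel hw hgw, map_smul, norm_smul, norm_inv,
    Complex.norm_real, norm_norm, mul_left_comm, le_inv_mul_iff₀ hpos, mul_one, mul_assoc]
  exact hle

lemma BallMoebius.commute_on_sphere_of_isCompactOperator_commutator (ht : 1 ≤ t)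
    (hf : S.IsCompositionOperator f Cf) (hg : S.IsCompositionOperator g Cg)
    (hcpt : IsCompactOperator ⇑(Cg.adjoint.comp Cf - Cf.comp Cg.adjoint))
    {η : EuclideanSpace ℂ (Fin N)} (hη : ‖η‖ = 1) : f (g η) = g (f η) := by
  by_contra hne
  have hfη := f.norm_apply_eq_one hη
  have hgη := g.norm_apply_eq_one hη
  have hgfη := g.norm_apply_eq_one hfη
  set ξ := f.symm (g (f η))
  have hξ : ‖ξ‖ = 1 := f.symm.norm_apply_eq_one hgfη
  have hfξ : f ξ = g (f η) := f.apply_symm_apply hgfη.le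
  have hbot : (𝓝[Ball N] f η).NeBot := by
    rw [← mem_closure_iff_nhdsWithin_neBot, closure_ball _ one_ne_zero]
    exact mem_closedBall_zero_iff.mpr hfη.le
  have hk := S.concentratesAt_normalizedKernel ht hfη
  have hgf := (hk.comp hf ht hη.le).adjoint_comp hg ht hη.le
  have hfg := (hfξ ▸ hk.adjoint_comp hg ht hfη.le).comp hf ht hξ.le
  have hcomm : Tendsto (fun w ↦ Cg.adjoint (Cf (S.normalizedKernel w)) -
      Cf (Cg.adjoint (S.normalizedKernel w))) (𝓝[Ball N] f η) (𝓝 0) :=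
    tendsto_apply_zero_of_isCompactOperator hcpt S.norm_normalizedKernel_le_one
      (S.tendsto_inner_normalizedKernel (by linarith) hfη)
  have hgf_zero := hgf.tendsto_zero_of_ne (hfg.congr hgf.exists_norm_le hcomm) ht hgη hξ
    fun heq ↦ hne (by rw [heq, hfξ])
  have hfg_zero := hgf_zero.sub hcomm
  simp only [sub_sub_cancel, sub_zero] at hfg_zero
  obtain ⟨C, hC⟩ := hf.exists_one_le_norm_apply_adjoint hg (by linarith)
  have hone_le := ge_of_tendsto (hfg_zero.norm.const_mul C) (eventually_mem_nhdsWithin.mono hC)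
  norm_num at hone_le

end Commutator

theorem commute_of_commutator_compact_ball_general
    (N : ℕ) (t : ℝ) (ht : 1 ≤ t) (S : BallKernelSpace N t)
    (φ ψ : EuclideanSpace ℂ (Fin N) → EuclideanSpace ℂ (Fin N))
    (hφ : IsBallAutomorphism N φ) (hψ : IsBallAutomorphism N ψ)
    (Cφ Cψ : S.H →L[ℂ] S.H)
    (hCφ : S.IsCompositionOperator φ Cφ) (hCψ : S.IsCompositionOperator ψ Cψ)
    (hcpt : IsCompactOperator
      ⇑((ContinuousLinearMap.adjoint Cψ).comp Cφ - Cφ.comp (ContinuousLinearMap.adjoint Cψ))) :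
    ∀ z ∈ Ball N, φ (ψ z) = ψ (φ z) := by
  intro z hz
  obtain ⟨f, hf⟩ := hφ.exists_ballMoebius
  obtain ⟨g, hg⟩ := hψ.exists_ballMoebius
  rw [hg hz, hf hz, hf (g.mapsTo_ball hz), hg (f.mapsTo_ball hz)]
  exact BallMoebius.commute_of_commute_on_sphere
    (fun _ ↦ BallMoebius.commute_on_sphere_of_isCompactOperator_commutator ht
      (hCφ.congr hf) (hCψ.congr hg) hcpt) (mem_ball_zero_iff.mp hz)

/-- Let `φ, ψ` be automorphisms of the unit ball `B_N`.  If the commutator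
`[C_ψ*, C_φ] = C_ψ* C_φ - C_φ C_ψ*` is compact on the Hardy space `H²(B_N)` (`t = N`) or on
a weighted Bergman space `A²_s(B_N)` (`t = N + s + 1` for some `s > -1`), then
`φ ∘ ψ = ψ ∘ φ`. -/
theorem commute_of_commutator_compact_ball
    (N : ℕ) (t : ℝ)
    (ht : t = N ∨ ∃ s : ℝ, -1 < s ∧ t = N + s + 1)
    (S : BallKernelSpace N t)
    (φ ψ : EuclideanSpace ℂ (Fin N) → EuclideanSpace ℂ (Fin N))
    (hφ : IsBallAutomorphism N φ) (hψ : IsBallAutomorphism N ψ)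
    (Cφ Cψ : S.H →L[ℂ] S.H)
    (hCφ : S.IsCompositionOperator φ Cφ) (hCψ : S.IsCompositionOperator ψ Cψ)
    (hcpt : IsCompactOperator
      ⇑((ContinuousLinearMap.adjoint Cψ).comp Cφ - Cφ.comp (ContinuousLinearMap.adjoint Cψ))) :
    ∀ z ∈ Ball N, φ (ψ z) = ψ (φ z) := by
  rcases N.eq_zero_or_pos with rfl | hN
  · exact fun _ _ ↦ Subsingleton.elim _ _
  have hN_one : (1 : ℝ) ≤ N := by exact_mod_cast hN
  have ht_one : 1 ≤ t := by rcases ht with rfl | ⟨s, hs, rfl⟩ <;> linarith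
  exact commute_of_commutator_compact_ball_general N t ht_one S φ ψ hφ hψ Cφ Cψ hCφ hCψ hcpt
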